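/- arXiv:1008.1652 — 3 statements merged into one kernel-verified Lean document; each statement's English description precedes it below -/
import Mathlib

section
/- Let Σ be an alphabet with at least two symbols and fix b ∈ Σ. For all relatively prime integers n₁, n₂ ≥ 2 and all integers k₁, k₂ with 1 ≤ kᵢ < nᵢ (i = 1, 2), there exist regular languages L₁, L₂ over Σ with sc(Lᵢ) = nᵢ and tc_b(Lᵢ) = kᵢ (i = 1, 2) such that tc_b(L₁ ∪ L₂) = k₁·k₂ + k₁·(1 + n₂ − k₂) + k₂·(1 + n₁ − k₁), i.e. tc_b(L₁ ∪ L₂) = k₁n₂ + k₂n₁ − k₁k₂ + k₁ + k₂. -/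
/-- An incomplete DFA over alphabet `α` with state type `σ`:
the transition function is a partial function, modelled as `Option`-valued. -/
structure IDFA (α : Type) (σ : Type) where
  /-- The (partial) transition function. -/
  step : σ → α → Option σ
  /-- The start state. -/
  start : σ
  /-- The set of accepting states. -/
  accept : Set σ

namespace IDFA

variable {α σ : Type}

/-- The extended (partial) transition function on words. -/
def evalFrom (A : IDFA α σ) (q : σ) (w : List α) : Option σ :=
  w.foldl (fun oq a => oq.bind fun p => A.step p a) (some q)

/-- Running the automaton from the start state. -/
def eval (A : IDFA α σ) (w : List α) : Option σ :=
  A.evalFrom A.start w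

/-- The language recognized by an incomplete DFA: words on which the run is
defined and ends in an accepting state. -/
def accepts (A : IDFA α σ) : Set (List α) :=
  {w | ∃ q ∈ A.accept, A.eval w = some q}

/-- `#tr(A)`: the number of (defined) transitions of `A`. -/
noncomputable def trCount (A : IDFA α σ) : ℕ :=
  {p : σ × α | (A.step p.1 p.2).isSome}.ncard

/-- `#tr(A, b)`: the number of `b`-transitions of `A`. -/
noncomputable def trCountOn (A : IDFA α σ) (b : α) : ℕ :=
  {q : σ | (A.step q b).isSome}.ncard

/-- An incomplete DFA is connected if every state is reachable from the start state. -/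
def Connected (A : IDFA α σ) : Prop :=
  ∀ q : σ, ∃ w : List α, A.evalFrom A.start w = some q

end IDFA

/-- A language is regular iff it is recognized by some incomplete DFA with
finitely many states. -/
def IsRegularLang {α : Type} (L : Set (List α)) : Prop :=
  ∃ (σ : Type) (_ : Finite σ) (A : IDFA α σ), A.accepts = L

/-- `tc(L)`: the transition complexity of `L`, i.e. the minimal number of
transitions of any incomplete DFA recognizing `L`. -/
noncomputable def tc {α : Type} (L : Set (List α)) : ℕ :=
  sInf {n | ∃ (σ : Type) (_ : Finite σ) (A : IDFA α σ), A.accepts = L ∧ A.trCount = n}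

/-- `tc_b(L)`: the `b`-transition complexity of `L`, i.e. the minimal number of
`b`-transitions of any incomplete DFA recognizing `L`. -/
noncomputable def tcOn {α : Type} (L : Set (List α)) (b : α) : ℕ :=
  sInf {n | ∃ (σ : Type) (_ : Finite σ) (A : IDFA α σ), A.accepts = L ∧ A.trCountOn b = n}

/-- `sc(L)`: the (incomplete-DFA) state complexity of `L`, i.e. the number of
states of a minimal incomplete DFA recognizing `L`. -/
noncomputable def sc {α : Type} (L : Set (List α)) : ℕ :=
  sInf {n | ∃ (σ : Type) (_ : Finite σ) (A : IDFA α σ), A.accepts = L ∧ Nat.card σ = n}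

namespace IDFA

variable {α σ τ : Type}

theorem foldl_none (A : IDFA α σ) (w : List α) :
    w.foldl (fun oq a => oq.bind fun p => A.step p a) none = none := by
  induction w with
  | nil => rfl
  | cons a w ih => simpa using ih

theorem foldl_eq (A : IDFA α σ) (o : Option σ) (w : List α) :
    w.foldl (fun oq a => oq.bind fun p => A.step p a) o = o.bind fun p => A.evalFrom p w := by
  cases o with
  | none => simpa using A.foldl_none w
  | some q => rfl

theorem evalFrom_nil (A : IDFA α σ) (q : σ) : A.evalFrom q [] = some q := rfl

theorem evalFrom_cons (A : IDFA α σ) (q : σ) (a : α) (w : List α) :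
    A.evalFrom q (a :: w) = (A.step q a).bind fun p => A.evalFrom p w := by
  rw [← foldl_eq]; rfl

theorem evalFrom_append (A : IDFA α σ) (q : σ) (u v : List α) :
    A.evalFrom q (u ++ v) = (A.evalFrom q u).bind fun p => A.evalFrom p v := by
  rw [← foldl_eq]; simp [evalFrom]

theorem mem_accepts_append (A : IDFA α σ) {u : List α} {q : σ} (h : A.eval u = some q)
    (z : List α) : u ++ z ∈ A.accepts ↔ ∃ f ∈ A.accept, A.evalFrom q z = some f := by
  unfold eval at h
  simp [accepts, eval, evalFrom_append, h]

theorem eval_some_of_mem (A : IDFA α σ) {u z : List α} (h : u ++ z ∈ A.accepts) :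
    ∃ q, A.eval u = some q := by
  obtain ⟨f, hf, h⟩ := h
  unfold eval at h ⊢
  rw [evalFrom_append] at h
  cases hq : A.evalFrom A.start u with
  | none => simp [hq] at h
  | some q => exact ⟨q, rfl⟩

theorem tcOn_eq (A : IDFA α σ) [Finite σ] (b : α)
    (hr : ∀ q, (A.step q b).isSome → ∃ w, A.eval w = some q)
    (hd : ∀ q q', (A.step q b).isSome → (A.step q' b).isSome →
      (∀ z, (∃ f ∈ A.accept, A.evalFrom q z = some f) ↔
        (∃ f ∈ A.accept, A.evalFrom q' z = some f)) → q = q')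
    (hc : ∀ q q', A.step q b = some q' → ∃ z, ∃ f ∈ A.accept, A.evalFrom q' z = some f) :
    tcOn A.accepts b = A.trCountOn b := by
  apply le_antisymm
  · exact Nat.sInf_le ⟨σ, inferInstance, A, rfl, rfl⟩
  · refine le_csInf ⟨_, ⟨σ, inferInstance, A, rfl, rfl⟩⟩ ?_
    rintro n ⟨τ, _, B, hB, rfl⟩
    have key : ∀ q, (A.step q b).isSome → ∃ w p, A.eval w = some q ∧ B.eval w = some p ∧
        (B.step p b).isSome := by
      intro q hq
      obtain ⟨w, hw⟩ := hr q hq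
      obtain ⟨q', hq'⟩ := Option.isSome_iff_exists.1 hq
      obtain ⟨z, hz⟩ := hc q q' hq'
      have hm : w ++ (b :: z) ∈ A.accepts := by
        rw [A.mem_accepts_append hw]
        simpa [evalFrom_cons, hq'] using hz
      rw [← hB] at hm
      obtain ⟨p, hp⟩ := B.eval_some_of_mem hm
      refine ⟨w, p, hw, hp, ?_⟩
      rw [B.mem_accepts_append hp] at hm
      obtain ⟨f, _, hf⟩ := hm
      rw [evalFrom_cons] at hf
      cases hs : B.step p b with
      | none => simp [hs] at hf
      | some _ => rfl
    have : Nonempty τ := ⟨B.start⟩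
    choose! w p h1 h2 h3 using key
    unfold trCountOn
    apply Set.ncard_le_ncard_of_injOn p
    · intro q hq; exact h3 q hq
    · intro q hq q' hq' e
      apply hd q q' hq hq'
      intro z
      rw [← A.mem_accepts_append (h1 q hq), ← A.mem_accepts_append (h1 q' hq'), ← hB,
        B.mem_accepts_append (h2 q hq), B.mem_accepts_append (h2 q' hq'), e]

theorem sc_eq (A : IDFA α σ) [Finite σ]
    (hr : ∀ q, ∃ w, A.eval w = some q)
    (hd : ∀ q q', (∀ z, (∃ f ∈ A.accept, A.evalFrom q z = some f) ↔
        (∃ f ∈ A.accept, A.evalFrom q' z = some f)) → q = q')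
    (hc : ∀ q, ∃ z, ∃ f ∈ A.accept, A.evalFrom q z = some f) :
    sc A.accepts = Nat.card σ := by
  apply le_antisymm
  · exact Nat.sInf_le ⟨σ, inferInstance, A, rfl, rfl⟩
  · refine le_csInf ⟨_, ⟨σ, inferInstance, A, rfl, rfl⟩⟩ ?_
    rintro n ⟨τ, _, B, hB, rfl⟩
    have key : ∀ q, ∃ w p, A.eval w = some q ∧ B.eval w = some p := by
      intro q
      obtain ⟨w, hw⟩ := hr q
      obtain ⟨z, hz⟩ := hc q
      have hm : w ++ z ∈ A.accepts := (A.mem_accepts_append hw z).2 hz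
      rw [← hB] at hm
      obtain ⟨p, hp⟩ := B.eval_some_of_mem hm
      exact ⟨w, p, hw, hp⟩
    choose w p h1 h2 using key
    apply Nat.card_le_card_of_injective p
    intro q q' e
    apply hd q q'
    intro z
    rw [← A.mem_accepts_append (h1 q), ← A.mem_accepts_append (h1 q'), ← hB,
        B.mem_accepts_append (h2 q), B.mem_accepts_append (h2 q'), e]

/-- Normalization: the pair of dead states becomes undefined. -/
def nrm : Option σ × Option τ → Option (Option σ × Option τ)
  | (none, none) => none
  | r => some r

/-- Product automaton for the union. -/
def prodU (A : IDFA α σ) (B : IDFA α τ) : IDFA α (Option σ × Option τ) where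
  step s c := nrm (s.1.bind fun p => A.step p c, s.2.bind fun p => B.step p c)
  start := (some A.start, some B.start)
  accept := {s | (∃ p ∈ A.accept, s.1 = some p) ∨ (∃ p ∈ B.accept, s.2 = some p)}

theorem prodU_evalFrom (A : IDFA α σ) (B : IDFA α τ) (w : List α) :
    ∀ x y, (nrm (x, y)).bind (fun s => (prodU A B).evalFrom s w) =
      nrm (x.bind fun p => A.evalFrom p w, y.bind fun p => B.evalFrom p w) := by
  induction w with
  | nil =>
    intro x y
    rcases x with _ | x <;> rcases y with _ | y <;> rfl
  | cons c w ih =>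
    intro x y
    have h := ih (x.bind fun p => A.step p c) (y.bind fun p => B.step p c)
    rcases x with _ | x <;> rcases y with _ | y
    · rfl
    all_goals
      simp only [evalFrom_cons, Option.bind_none, Option.bind_some] at h ⊢
      rw [← h]
      simp [nrm, prodU, evalFrom_cons]

theorem prodU_evalFrom' (A : IDFA α σ) (B : IDFA α τ) (w : List α) (s : Option σ × Option τ)
    (hs : s ≠ (none, none)) :
    (prodU A B).evalFrom s w =
      nrm (s.1.bind fun p => A.evalFrom p w, s.2.bind fun p => B.evalFrom p w) := by
  rw [← prodU_evalFrom]
  obtain ⟨_ | x, _ | y⟩ := s <;> simp [nrm] at hs ⊢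

theorem prodU_acc (A : IDFA α σ) (B : IDFA α τ) (w : List α) (s : Option σ × Option τ)
    (hs : s ≠ (none, none)) :
    (∃ f ∈ (prodU A B).accept, (prodU A B).evalFrom s w = some f) ↔
      (∃ p, s.1 = some p ∧ ∃ f ∈ A.accept, A.evalFrom p w = some f) ∨
      (∃ p, s.2 = some p ∧ ∃ f ∈ B.accept, B.evalFrom p w = some f) := by
  rw [prodU_evalFrom' A B w s hs]
  have : ∀ r : Option σ × Option τ, (∃ f ∈ (prodU A B).accept, nrm r = some f) ↔
      (∃ p ∈ A.accept, r.1 = some p) ∨ (∃ p ∈ B.accept, r.2 = some p) := by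
    rintro ⟨_ | x, _ | y⟩ <;> simp [nrm, prodU]
  rw [this]
  obtain ⟨_ | x, _ | y⟩ := s <;> simp

theorem prodU_accepts (A : IDFA α σ) (B : IDFA α τ) :
    (prodU A B).accepts = A.accepts ∪ B.accepts := by
  ext w
  have := prodU_acc A B w (some A.start, some B.start) (by simp)
  refine Iff.trans this ?_
  simp [accepts, eval]

open Classical in
/-- The witness automaton. -/
noncomputable def cyc (a b : α) (n k : ℕ) : IDFA α (ZMod n) where
  step q x := if x = a then some (q + 1) else if x = b ∧ q.val < k then some q else none
  start := 0
  accept := {0}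

theorem cyc_rep (a b : α) (n k m : ℕ) : ∀ q,
    (cyc a b n k).evalFrom q (List.replicate m a) = some (q + m) := by
  induction m with
  | zero => intro q; simp [evalFrom_nil]
  | succ m ih =>
    intro q
    simp [List.replicate_succ, evalFrom_cons, cyc] 
    have := ih (q + 1)
    simp only [cyc] at this
    rw [this]; congr 1; ring

theorem cyc_acc (a b : α) (n k m : ℕ) (q : ZMod n) :
    (∃ f ∈ (cyc a b n k).accept, (cyc a b n k).evalFrom q (List.replicate m a) = some f) ↔
      (m : ZMod n) = - q := by
  rw [cyc_rep]
  simp only [cyc, Set.mem_singleton_iff, exists_eq_left, Option.some.injEq]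
  rw [eq_neg_iff_add_eq_zero, add_comm]

theorem cyc_step_b {a b : α} (hab : b ≠ a) (n k : ℕ) (q : ZMod n) :
    (cyc a b n k).step q b = if q.val < k then some q else none := by
  simp [cyc, hab]

theorem ncard_val_lt (n k : ℕ) (hk : k < n) : {q : ZMod n | q.val < k}.ncard = k := by
  have : {q : ZMod n | q.val < k} = (fun i : ℕ => (i : ZMod n)) '' (Set.Iio k) := by
    have : NeZero n := ⟨by omega⟩
    ext q
    constructor
    · intro h; exact ⟨q.val, h, by simp⟩
    · rintro ⟨i, hi, rfl⟩
      simp only [Set.mem_Iio] at hi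
      simpa [ZMod.val_cast_of_lt (hi.trans hk)] using hi
  rw [this, Set.ncard_image_of_injOn]
  · simp [Set.ncard_eq_toFinset_card']
  · intro i hi j hj h
    simp only [Set.mem_Iio] at hi hj
    have := congrArg ZMod.val h
    simpa [ZMod.val_cast_of_lt (hi.trans hk), ZMod.val_cast_of_lt (hj.trans hk)] using this

theorem cyc_reg (a b : α) (n k : ℕ) (hk : k < n) : IsRegularLang (cyc a b n k).accepts :=
  have : NeZero n := ⟨by omega⟩
  ⟨ZMod n, inferInstance, _, rfl⟩

theorem cyc_reach (a b : α) (n k : ℕ) (hk : k < n) (q : ZMod n) :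
    ∃ w, (cyc a b n k).eval w = some q := by
  have : NeZero n := ⟨by omega⟩
  refine ⟨List.replicate q.val a, ?_⟩
  unfold eval
  rw [cyc_rep]
  simp [cyc]

theorem cyc_coreach (a b : α) (n k : ℕ) (hk : k < n) (q : ZMod n) :
    ∃ z, ∃ f ∈ (cyc a b n k).accept, (cyc a b n k).evalFrom q z = some f := by
  have : NeZero n := ⟨by omega⟩
  refine ⟨List.replicate (-q).val a, ?_⟩
  rw [cyc_acc]; simp

theorem cyc_dist (a b : α) (n k : ℕ) (hk : k < n) (q q' : ZMod n)
    (h : ∀ z, (∃ f ∈ (cyc a b n k).accept, (cyc a b n k).evalFrom q z = some f) ↔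
        (∃ f ∈ (cyc a b n k).accept, (cyc a b n k).evalFrom q' z = some f)) : q = q' := by
  have : NeZero n := ⟨by omega⟩
  have := h (List.replicate (-q).val a)
  rw [cyc_acc, cyc_acc] at this
  simpa using this

theorem cyc_sc (a b : α) (n k : ℕ) (hk : k < n) : sc (cyc a b n k).accepts = n := by
  have : NeZero n := ⟨by omega⟩
  rw [sc_eq _ (cyc_reach a b n k hk) (cyc_dist a b n k hk) (cyc_coreach a b n k hk)]
  simp

theorem cyc_tc {a b : α} (hab : b ≠ a) (n k : ℕ) (hk : k < n) :
    tcOn (cyc a b n k).accepts b = k := by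
  have : NeZero n := ⟨by omega⟩
  rw [tcOn_eq _ b (fun q _ => cyc_reach a b n k hk q) (fun q q' _ _ => cyc_dist a b n k hk q q')
    (fun q q' _ => cyc_coreach a b n k hk q')]
  unfold trCountOn
  conv_rhs => rw [← ncard_val_lt n k hk]
  congr 1
  ext q
  simp [cyc_step_b hab]

theorem crt (n m : ℕ) (hn : 0 < n) (hm : 0 < m) (h : Nat.Coprime n m) (x : ZMod n) (y : ZMod m) :
    ∃ i : ℕ, (i : ZMod n) = x ∧ (i : ZMod m) = y := by
  have : NeZero n := ⟨by omega⟩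
  have : NeZero m := ⟨by omega⟩
  obtain ⟨i, h1, h2⟩ := Nat.chineseRemainder h x.val y.val
  refine ⟨i, ?_, ?_⟩
  · rw [(ZMod.natCast_eq_natCast_iff _ _ _).2 h1]; simp
  · rw [(ZMod.natCast_eq_natCast_iff _ _ _).2 h2]; simp

/-- Half of the distinguishability of pairs. -/
theorem dist_half (n m : ℕ) (hn : 2 ≤ n) (hm : 2 ≤ m) (h : Nat.Coprime n m)
    (x x' : Option (ZMod n)) (y y' : Option (ZMod m))
    (H : ∀ i : ℕ, ((∃ p, x = some p ∧ (i : ZMod n) = -p) ∨ (∃ p, y = some p ∧ (i : ZMod m) = -p)) →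
      ((∃ p, x' = some p ∧ (i : ZMod n) = -p) ∨ (∃ p, y' = some p ∧ (i : ZMod m) = -p)))
    (p : ZMod n) (hp : x = some p) : x' = some p := by
  have : Fact (1 < m) := ⟨by omega⟩
  have : ∃ c : ZMod m, ∀ r, y' = some r → c ≠ -r := by
    rcases y' with _ | r
    · exact ⟨0, by simp⟩
    · refine ⟨-r + 1, ?_⟩
      rintro _ ⟨⟩
      simp
  obtain ⟨c, hc⟩ := this
  obtain ⟨i, h1, h2⟩ := crt n m (by omega) (by omega) h (-p) c
  rcases H i (Or.inl ⟨p, hp, h1⟩) with ⟨r, hr, e⟩ | ⟨r, hr, e⟩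
  · rw [h1] at e
    rw [hr, neg_injective e]
  · exact absurd (h2.symm.trans e) (hc r hr)

theorem opt_ext {β : Type} (x x' : Option β) (h : ∀ p, x = some p → x' = some p)
    (h' : ∀ p, x' = some p → x = some p) : x = x' := by
  ext p; exact ⟨h p, h' p⟩

theorem nrm_eq (r : Option σ × Option τ) (hr : r ≠ (none, none)) : nrm r = some r := by
  obtain ⟨_ | x, _ | y⟩ := r <;> simp [nrm] at hr ⊢

theorem nrm_isSome (r : Option σ × Option τ) : (nrm r).isSome ↔ (r.1.isSome ∨ r.2.isSome) := by
  obtain ⟨_ | x, _ | y⟩ := r <;> simp [nrm]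

theorem nrm_some (r s : Option σ × Option τ) (h : nrm r = some s) : s ≠ (none, none) := by
  obtain ⟨_ | x, _ | y⟩ := r <;> simp [nrm] at h <;> subst h <;> simp

theorem prod_reach {a b : α} (hab : b ≠ a) (n₁ n₂ k₁ k₂ : ℕ) (hcop : Nat.Coprime n₁ n₂)
    (hk₁ : 1 ≤ k₁) (hk₁' : k₁ < n₁) (hk₂ : 1 ≤ k₂) (hk₂' : k₂ < n₂)
    (s : Option (ZMod n₁) × Option (ZMod n₂)) (hs : s ≠ (none, none)) :
    ∃ w, (prodU (cyc a b n₁ k₁) (cyc a b n₂ k₂)).eval w = some s := by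
  have : NeZero n₁ := ⟨by omega⟩
  have : NeZero n₂ := ⟨by omega⟩
  have e0 : ∀ w, (prodU (cyc a b n₁ k₁) (cyc a b n₂ k₂)).eval w =
      nrm ((cyc a b n₁ k₁).evalFrom 0 w, (cyc a b n₂ k₂).evalFrom 0 w) := by
    intro w
    exact prodU_evalFrom' _ _ w (some 0, some 0) (by simp)
  have ev : ∀ n k i j : ℕ, (cyc a b n k).evalFrom 0
      (List.replicate i a ++ b :: List.replicate j a) =
      if (i : ZMod n).val < k then some (i + j : ZMod n) else none := by
    intro n k i j
    rw [evalFrom_append, cyc_rep]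
    simp only [Option.bind_some, evalFrom_cons, cyc_step_b hab, zero_add]
    split_ifs
    · simp [cyc_rep]
    · rfl
  obtain ⟨_ | x, _ | y⟩ := s
  · simp at hs
  · obtain ⟨i, h1, h2⟩ := crt n₁ n₂ (by omega) (by omega) hcop (k₁ : ZMod n₁) 0
    refine ⟨List.replicate i a ++ b :: List.replicate y.val a, ?_⟩
    rw [e0, ev, ev, h1, h2, ZMod.val_cast_of_lt hk₁', if_neg (by simp), if_pos (by simp; omega)]
    simp [nrm]
  · obtain ⟨i, h1, h2⟩ := crt n₁ n₂ (by omega) (by omega) hcop 0 (k₂ : ZMod n₂)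
    refine ⟨List.replicate i a ++ b :: List.replicate x.val a, ?_⟩
    rw [e0, ev, ev, h1, h2, ZMod.val_cast_of_lt hk₂', if_pos (by simp; omega), if_neg (by simp)]
    simp [nrm]
  · obtain ⟨i, h1, h2⟩ := crt n₁ n₂ (by omega) (by omega) hcop x y
    refine ⟨List.replicate i a, ?_⟩
    rw [e0, cyc_rep, cyc_rep, h1, h2]
    simp [nrm]

theorem prod_dist {a b : α} (n₁ n₂ k₁ k₂ : ℕ) (hcop : Nat.Coprime n₁ n₂)
    (hn₁ : 2 ≤ n₁) (hn₂ : 2 ≤ n₂)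
    (s s' : Option (ZMod n₁) × Option (ZMod n₂)) (hs : s ≠ (none, none)) (hs' : s' ≠ (none, none))
    (H : ∀ z, (∃ f ∈ (prodU (cyc a b n₁ k₁) (cyc a b n₂ k₂)).accept,
        (prodU (cyc a b n₁ k₁) (cyc a b n₂ k₂)).evalFrom s z = some f) ↔
      (∃ f ∈ (prodU (cyc a b n₁ k₁) (cyc a b n₂ k₂)).accept,
        (prodU (cyc a b n₁ k₁) (cyc a b n₂ k₂)).evalFrom s' z = some f)) : s = s' := by
  have H' : ∀ i : ℕ, _ := fun i => H (List.replicate i a)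
  simp only [prodU_acc _ _ _ _ hs, prodU_acc _ _ _ _ hs', cyc_acc] at H'
  apply Prod.ext
  · apply opt_ext
    · exact dist_half n₁ n₂ hn₁ hn₂ hcop _ _ _ _ fun i => (H' i).1
    · exact dist_half n₁ n₂ hn₁ hn₂ hcop _ _ _ _ fun i => (H' i).2
  · apply opt_ext
    · exact dist_half n₂ n₁ hn₂ hn₁ hcop.symm _ _ _ _ fun i h => ((H' i).1 h.symm).symm
    · exact dist_half n₂ n₁ hn₂ hn₁ hcop.symm _ _ _ _ fun i h => ((H' i).2 h.symm).symm

theorem opt_count {a b : α} (hab : b ≠ a) (n k : ℕ) (hk : k < n) :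
    {x : Option (ZMod n) | (x.bind fun p => (cyc a b n k).step p b).isSome}.ncard = k := by
  have : {x : Option (ZMod n) | (x.bind fun p => (cyc a b n k).step p b).isSome} =
      some '' {q : ZMod n | q.val < k} := by
    ext x
    rcases x with _ | x <;> simp [cyc_step_b hab]
  rw [this, Set.ncard_image_of_injective _ (Option.some_injective _), ncard_val_lt n k hk]

theorem prod_count {a b : α} (hab : b ≠ a) (n₁ n₂ k₁ k₂ : ℕ)
    (hk₁' : k₁ < n₁) (hk₂' : k₂ < n₂) :
    (prodU (cyc a b n₁ k₁) (cyc a b n₂ k₂)).trCountOn b =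
      k₁ * n₂ + k₂ * n₁ - k₁ * k₂ + k₁ + k₂ := by
  have : NeZero n₁ := ⟨by omega⟩
  have : NeZero n₂ := ⟨by omega⟩
  have c1 := opt_count hab n₁ k₁ hk₁'
  have c2 := opt_count hab n₂ k₂ hk₂'
  unfold trCountOn
  set S := {x : Option (ZMod n₁) | (x.bind fun p => (cyc a b n₁ k₁).step p b).isSome} with hS
  set T := {x : Option (ZMod n₂) | (x.bind fun p => (cyc a b n₂ k₂).step p b).isSome} with hT
  have e : {q | ((prodU (cyc a b n₁ k₁) (cyc a b n₂ k₂)).step q b).isSome} = (Sᶜ ×ˢ Tᶜ)ᶜ := by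
    ext q
    simp only [prodU, Set.mem_setOf_eq, nrm_isSome, Set.mem_compl_iff, Set.mem_prod, hS, hT]
    tauto
  rw [e]
  have t := Set.ncard_add_ncard_compl (Sᶜ ×ˢ Tᶜ)
  have t1 := Set.ncard_add_ncard_compl S
  have t2 := Set.ncard_add_ncard_compl T
  rw [Set.ncard_prod, Nat.card_prod] at t
  simp only [Finite.card_option, Nat.card_zmod] at t t1 t2
  obtain ⟨d₁, rfl⟩ := Nat.exists_eq_add_of_lt hk₁'
  obtain ⟨d₂, rfl⟩ := Nat.exists_eq_add_of_lt hk₂'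
  have u1 : Sᶜ.ncard = d₁ + 2 := by omega
  have u2 : Tᶜ.ncard = d₂ + 2 := by omega
  rw [u1, u2] at t
  have : k₁ * (k₂ + d₂ + 1) + k₂ * (k₁ + d₁ + 1) - k₁ * k₂ =
      k₁ * (k₂ + d₂ + 1) + k₂ * (d₁ + 1) := by
    rw [Nat.sub_eq_iff_eq_add] <;> nlinarith
  rw [this]
  nlinarith

end IDFA

/-- the upper bound for the `b`-transition complexity of union is
tight for relatively prime `n₁, n₂ ≥ 2` and any `1 ≤ kᵢ < nᵢ`. -/
theorem tcOn_union_lower_bound {α : Type} [Finite α] (hcard : 2 ≤ Nat.card α) (b : α)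
    (n₁ n₂ k₁ k₂ : ℕ) (hn₁ : 2 ≤ n₁) (hn₂ : 2 ≤ n₂) (hcop : Nat.Coprime n₁ n₂)
    (hk₁ : 1 ≤ k₁) (hk₁' : k₁ < n₁) (hk₂ : 1 ≤ k₂) (hk₂' : k₂ < n₂) :
    ∃ L₁ L₂ : Set (List α), IsRegularLang L₁ ∧ IsRegularLang L₂ ∧
      sc L₁ = n₁ ∧ sc L₂ = n₂ ∧ tcOn L₁ b = k₁ ∧ tcOn L₂ b = k₂ ∧
      tcOn (L₁ ∪ L₂) b = k₁ * n₂ + k₂ * n₁ - k₁ * k₂ + k₁ + k₂ := by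
  have : ∃ a : α, b ≠ a := by
    have : Nontrivial α := (Finite.one_lt_card_iff_nontrivial).1 hcard
    obtain ⟨a, h⟩ := exists_ne b
    exact ⟨a, h.symm⟩
  obtain ⟨a, hab⟩ := this
  have : NeZero n₁ := ⟨by omega⟩
  have : NeZero n₂ := ⟨by omega⟩
  refine ⟨(IDFA.cyc a b n₁ k₁).accepts, (IDFA.cyc a b n₂ k₂).accepts,
    IDFA.cyc_reg _ _ _ _ hk₁', IDFA.cyc_reg _ _ _ _ hk₂',
    IDFA.cyc_sc _ _ _ _ hk₁', IDFA.cyc_sc _ _ _ _ hk₂',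
    IDFA.cyc_tc hab _ _ hk₁', IDFA.cyc_tc hab _ _ hk₂', ?_⟩
  rw [← IDFA.prodU_accepts, ← IDFA.prod_count hab n₁ n₂ k₁ k₂ hk₁' hk₂']
  have ne : ∀ s, ((IDFA.prodU (IDFA.cyc a b n₁ k₁) (IDFA.cyc a b n₂ k₂)).step s b).isSome →
      s ≠ (none, none) := by
    rintro s h rfl
    simp [IDFA.prodU, IDFA.nrm] at h
  apply IDFA.tcOn_eq
  · intro s h
    exact IDFA.prod_reach hab n₁ n₂ k₁ k₂ hcop hk₁ hk₁' hk₂ hk₂' s (ne s h)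
  · intro s s' h h'
    exact IDFA.prod_dist n₁ n₂ k₁ k₂ hcop hn₁ hn₂ s s' (ne s h) (ne s' h')
  · intro s s' h
    have hs' : s' ≠ (none, none) := IDFA.nrm_some _ _ h
    obtain ⟨_ | x, _ | y⟩ := s'
    · simp at hs'
    · obtain ⟨z, hz⟩ := IDFA.cyc_coreach a b n₂ k₂ hk₂' y
      exact ⟨z, (IDFA.prodU_acc _ _ z _ hs').2 (Or.inr ⟨y, rfl, hz⟩)⟩
    all_goals
      obtain ⟨z, hz⟩ := IDFA.cyc_coreach a b n₁ k₁ hk₁' x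
      exact ⟨z, (IDFA.prodU_acc _ _ z _ hs').2 (Or.inl ⟨x, rfl, hz⟩)⟩
end

section
/- Let Σ be an alphabet with at least two symbols and fix c ∈ Σ. Let n₁ and n₂ be relatively prime integers with n₁, n₂ ≥ 2, and for each b ∈ Σ \ {c} fix integers k_{1,b}, k_{2,b} with 1 ≤ k_{i,b} < nᵢ (i = 1, 2). Then there exist regular languages L₁, L₂ over Σ such that sc(Lᵢ) = nᵢ and tc_b(Lᵢ) = k_{i,b} for all b ∈ Σ \ {c} (i = 1, 2), and for every b ∈ Σ \ {c}, tc_b(L₁ ∪ L₂) = k_{1,b}·k_{2,b} + k_{1,b}·(1 + n₂ − k_{2,b}) + k_{2,b}·(1 + n₁ − k_{1,b}). -/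
namespace UnionLB

variable {α σ τ : Type}

theorem evalFrom_nil (A : IDFA α σ) (q : σ) : A.evalFrom q [] = some q := rfl

theorem foldl_none (A : IDFA α σ) (w : List α) :
    w.foldl (fun oq a => oq.bind fun p => A.step p a) none = none := by
  induction w with
  | nil => rfl
  | cons a w ih => simpa using ih

theorem evalFrom_cons (A : IDFA α σ) (q : σ) (a : α) (w : List α) :
    A.evalFrom q (a :: w) = (A.step q a).bind (fun p => A.evalFrom p w) := by
  unfold IDFA.evalFrom
  rw [List.foldl_cons]
  cases h : A.step q a with
  | none => simp [h, foldl_none]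
  | some p => simp [h]

theorem evalFrom_append (A : IDFA α σ) (q : σ) (u v : List α) :
    A.evalFrom q (u ++ v) = (A.evalFrom q u).bind (fun p => A.evalFrom p v) := by
  induction u generalizing q with
  | nil => simp [evalFrom_nil]
  | cons a u ih =>
    rw [List.cons_append, evalFrom_cons, evalFrom_cons]
    cases h : A.step q a with
    | none => simp
    | some p => simp [ih]

/-- acceptance from a state -/
def Acc (A : IDFA α σ) (q : σ) (w : List α) : Prop :=
  ∃ p ∈ A.accept, A.evalFrom q w = some p

theorem acc_nil (A : IDFA α σ) (q : σ) : Acc A q [] ↔ q ∈ A.accept := by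
  simp [Acc, evalFrom_nil]

theorem acc_cons (A : IDFA α σ) (q : σ) (a : α) (w : List α) :
    Acc A q (a :: w) ↔ ∃ p, A.step q a = some p ∧ Acc A p w := by
  unfold Acc
  rw [evalFrom_cons]
  cases h : A.step q a with
  | none => simp
  | some p => simp

theorem mem_accepts_append (A : IDFA α σ) (u v : List α) :
    u ++ v ∈ A.accepts ↔ ∃ p, A.eval u = some p ∧ Acc A p v := by
  unfold IDFA.accepts IDFA.eval Acc
  simp only [Set.mem_setOf_eq]
  rw [evalFrom_append]
  cases h : A.evalFrom A.start u with
  | none => simp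
  | some p => simp

theorem key (A : IDFA α σ) (B : IDFA α τ) (hL : B.accepts = A.accepts) (S : Set σ)
    (reach : ∀ q ∈ S, ∃ w, A.eval w = some q)
    (live : ∀ q ∈ S, ∃ w, Acc A q w)
    (dist : ∀ p ∈ S, ∀ q ∈ S, p ≠ q → ∃ w, ¬ (Acc A p w ↔ Acc A q w)) :
    ∃ f : σ → τ, Set.InjOn f S ∧
      ∀ q ∈ S, ∀ b, (∃ w, Acc A q (b :: w)) → (B.step (f q) b).isSome := by
  classical
  have h1 : ∀ q, ∃ t : τ, q ∈ S → ∀ w, Acc B t w ↔ Acc A q w := by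
    intro q
    by_cases hq : q ∈ S
    · obtain ⟨u, hu⟩ := reach q hq
      obtain ⟨v, hv⟩ := live q hq
      have hA : ∀ v, u ++ v ∈ A.accepts ↔ Acc A q v := by
        intro v
        rw [mem_accepts_append, hu]; simp
      have h2 : u ++ v ∈ B.accepts := by rw [hL, hA]; exact hv
      rw [mem_accepts_append] at h2
      obtain ⟨t, ht, -⟩ := h2
      refine ⟨t, fun _ w => ?_⟩
      rw [← hA, ← hL, mem_accepts_append, ht]; simp
    · exact ⟨B.start, fun h => absurd h hq⟩
  choose f hf using h1
  refine ⟨f, ?_, ?_⟩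
  · intro p hp q hq hpq
    by_contra hne
    obtain ⟨w, hw⟩ := dist p hp q hq hne
    apply hw
    rw [← hf p hp, ← hf q hq, hpq]
  · rintro q hq b ⟨w, hw⟩
    rw [← hf q hq, acc_cons] at hw
    obtain ⟨t, ht, -⟩ := hw
    simp [ht]

theorem tcOn_eq [Finite σ] (A : IDFA α σ) (b : α)
    (reach : ∀ q, (A.step q b).isSome → ∃ w, A.eval w = some q)
    (live : ∀ q, (A.step q b).isSome → ∃ w, Acc A q (b :: w))
    (dist : ∀ p, (A.step p b).isSome → ∀ q, (A.step q b).isSome → p ≠ q →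
      ∃ w, ¬ (Acc A p w ↔ Acc A q w)) :
    tcOn A.accepts b = A.trCountOn b := by
  apply le_antisymm
  · exact Nat.sInf_le ⟨σ, inferInstance, A, rfl, rfl⟩
  · apply le_csInf
    · exact ⟨_, σ, inferInstance, A, rfl, rfl⟩
    · rintro n ⟨τ, hτ, B, hB, rfl⟩
      obtain ⟨f, hf, hs⟩ := key A B hB {q | (A.step q b).isSome} reach
        (fun q hq => (live q hq).imp' (fun w => b :: w) (fun _ h => h)) dist
      exact Set.ncard_le_ncard_of_injOn f (fun q hq => hs q hq b (live q hq)) hf (Set.toFinite _)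

theorem sc_eq [Finite σ] (A : IDFA α σ)
    (reach : ∀ q, ∃ w, A.eval w = some q)
    (live : ∀ q, ∃ w, Acc A q w)
    (dist : ∀ p q, p ≠ q → ∃ w, ¬ (Acc A p w ↔ Acc A q w)) :
    sc A.accepts = Nat.card σ := by
  apply le_antisymm
  · exact Nat.sInf_le ⟨σ, inferInstance, A, rfl, rfl⟩
  · apply le_csInf
    · exact ⟨_, σ, inferInstance, A, rfl, rfl⟩
    · rintro n ⟨τ, hτ, B, hB, rfl⟩
      obtain ⟨f, hf, -⟩ := key A B hB Set.univ (fun q _ => reach q) (fun q _ => live q)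
        (fun p _ q _ => dist p q)
      exact Nat.card_le_card_of_injective f (Set.injOn_univ.mp hf)

open Classical in
/-- cyclic automaton -/
noncomputable def cyc (n : ℕ) (c : α) (k : α → ℕ) : IDFA α (ZMod n) where
  step q a := if a = c then some (q + 1) else if q.val < k a then some q else none
  start := 0
  accept := {0}

theorem cyc_step_c (n : ℕ) (c : α) (k : α → ℕ) (q : ZMod n) :
    (cyc n c k).step q c = some (q + 1) := by simp [cyc]

theorem cyc_step_b (n : ℕ) (c : α) (k : α → ℕ) (q : ZMod n) (b : α) (hb : b ≠ c) :
    (cyc n c k).step q b = if q.val < k b then some q else none := by simp [cyc, hb]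

theorem cyc_eval (n : ℕ) (c : α) (k : α → ℕ) (q : ZMod n) (m : ℕ) :
    (cyc n c k).evalFrom q (List.replicate m c) = some (q + m) := by
  induction m generalizing q with
  | zero => simp [evalFrom_nil]
  | succ m ih =>
    rw [List.replicate_succ, evalFrom_cons, cyc_step_c]
    simp [ih]; ring

theorem cyc_acc (n : ℕ) (c : α) (k : α → ℕ) (q : ZMod n) (m : ℕ) :
    Acc (cyc n c k) q (List.replicate m c) ↔ q + m = 0 := by
  unfold Acc
  rw [cyc_eval]; simp [cyc]

theorem cyc_reach (n : ℕ) [NeZero n] (c : α) (k : α → ℕ) (q : ZMod n) :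
    ∃ w, (cyc n c k).eval w = some q :=
  ⟨List.replicate q.val c, by
    unfold IDFA.eval; rw [cyc_eval]; simp [cyc]⟩

theorem cyc_live (n : ℕ) [NeZero n] (c : α) (k : α → ℕ) (q : ZMod n) :
    ∃ w, Acc (cyc n c k) q w :=
  ⟨List.replicate (-q).val c, by rw [cyc_acc]; simp⟩

theorem cyc_dist (n : ℕ) [NeZero n] (c : α) (k : α → ℕ) (p q : ZMod n) (h : p ≠ q) :
    ∃ w, ¬ (Acc (cyc n c k) p w ↔ Acc (cyc n c k) q w) :=
  ⟨List.replicate (-p).val c, by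
    rw [cyc_acc, cyc_acc]
    simp only [ZMod.natCast_val, ZMod.cast_id', id_eq, add_neg_cancel, true_iff]
    intro h'
    exact h (add_neg_eq_zero.mp h').symm⟩

theorem cyc_live_b (n : ℕ) [NeZero n] (c : α) (k : α → ℕ) (q : ZMod n) (b : α)
    (h : ((cyc n c k).step q b).isSome) : ∃ w, Acc (cyc n c k) q (b :: w) := by
  obtain ⟨p, hp⟩ := Option.isSome_iff_exists.mp h
  obtain ⟨w, hw⟩ := cyc_live n c k p
  exact ⟨w, (acc_cons _ _ _ _).mpr ⟨p, hp, hw⟩⟩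

theorem cyc_tr (n : ℕ) [NeZero n] (c : α) (k : α → ℕ) (b : α) (hb : b ≠ c) (hk : k b < n) :
    (cyc n c k).trCountOn b = k b := by
  unfold IDFA.trCountOn
  have : {q : ZMod n | ((cyc n c k).step q b).isSome} =
      (fun i : ℕ => (i : ZMod n)) '' (Finset.range (k b) : Set ℕ) := by
    ext q
    simp only [Set.mem_setOf_eq, cyc_step_b _ _ _ _ _ hb, Set.mem_image, Finset.coe_range,
      Set.mem_Iio]
    constructor
    · intro h
      refine ⟨q.val, ?_, by simp⟩
      by_contra h'
      simp [h'] at h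
    · rintro ⟨i, hi, rfl⟩
      rw [ZMod.val_natCast_of_lt (hi.trans hk)]
      simp [hi]
  rw [this, Set.ncard_image_of_injOn, Set.ncard_coe_finset, Finset.card_range]
  intro i hi j hj hij
  simp only [Finset.coe_range, Set.mem_Iio] at hi hj
  have := congrArg ZMod.val hij
  simpa only [ZMod.val_natCast_of_lt (hi.trans hk), ZMod.val_natCast_of_lt (hj.trans hk)] using this

open Classical in
/-- product automaton for the union; the state `(none, none)` is a useless state -/
noncomputable def prod (A : IDFA α σ) (B : IDFA α τ) : IDFA α (Option σ × Option τ) where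
  step p a :=
    if (p.1.bind (A.step · a)).isSome ∨ (p.2.bind (B.step · a)).isSome then
      some (p.1.bind (A.step · a), p.2.bind (B.step · a)) else none
  start := (some A.start, some B.start)
  accept := {p | (∃ q, p.1 = some q ∧ q ∈ A.accept) ∨ (∃ q, p.2 = some q ∧ q ∈ B.accept)}

theorem prod_acc (A : IDFA α σ) (B : IDFA α τ) (x : Option σ) (y : Option τ) (w : List α) :
    Acc (prod A B) (x, y) w ↔
      (∃ q, x = some q ∧ Acc A q w) ∨ (∃ q, y = some q ∧ Acc B q w) := by
  induction w generalizing x y with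
  | nil => simp only [acc_nil]; rfl
  | cons a w ih =>
    simp only [acc_cons]
    have h1 : (∃ q, x = some q ∧ ∃ p, A.step q a = some p ∧ Acc A p w) ↔
        ∃ p, x.bind (A.step · a) = some p ∧ Acc A p w := by
      cases x <;> simp
    have h2 : (∃ q, y = some q ∧ ∃ p, B.step q a = some p ∧ Acc B p w) ↔
        ∃ p, y.bind (B.step · a) = some p ∧ Acc B p w := by
      cases y <;> simp
    rw [h1, h2, ← ih]
    simp only [prod]
    split_ifs with h
    · simp
    · have h3 : x.bind (A.step · a) = none := by
        by_contra h'; exact h (Or.inl (Option.isSome_iff_ne_none.mpr h'))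
      have h4 : y.bind (B.step · a) = none := by
        by_contra h'; exact h (Or.inr (Option.isSome_iff_ne_none.mpr h'))
      rw [h3, h4]
      have := ih none none
      simp only [prod] at this
      simp [this]

theorem prod_accepts (A : IDFA α σ) (B : IDFA α τ) :
    (prod A B).accepts = A.accepts ∪ B.accepts := by
  ext w
  have := prod_acc A B (some A.start) (some B.start) w
  simp only [Option.some.injEq, exists_eq_left'] at this
  exact this

theorem prod_tr [Finite σ] [Finite τ] (A : IDFA α σ) (B : IDFA α τ) (b : α) :
    (prod A B).trCountOn b = A.trCountOn b * (Nat.card τ + 1) +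
      (Nat.card σ + 1 - A.trCountOn b) * B.trCountOn b := by
  have hD : ∀ {ρ : Type} [Finite ρ] (C : IDFA α ρ),
      {x : Option ρ | (x.bind (C.step · b)).isSome}.ncard = C.trCountOn b := by
    intro ρ _ C
    have : {x : Option ρ | (x.bind (C.step · b)).isSome} =
        some '' {q : ρ | (C.step q b).isSome} := by
      ext x; cases x <;> simp
    rw [this, Set.ncard_image_of_injective _ (Option.some_injective _)]; rfl
  set D₁ := {x : Option σ | (x.bind (A.step · b)).isSome} with hD₁
  set D₂ := {x : Option τ | (x.bind (B.step · b)).isSome} with hD₂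
  have : {p : Option σ × Option τ | ((prod A B).step p b).isSome} =
      D₁ ×ˢ Set.univ ∪ D₁ᶜ ×ˢ D₂ := by
    ext ⟨x, y⟩
    have : ((prod A B).step (x, y) b).isSome ↔ x ∈ D₁ ∨ y ∈ D₂ := by
      simp only [prod, hD₁, hD₂, Set.mem_setOf_eq]
      split_ifs with h <;> simp [h]
    simp only [Set.mem_setOf_eq, this, Set.mem_union, Set.mem_prod, Set.mem_univ, Set.mem_compl_iff]
    tauto
  unfold IDFA.trCountOn at *
  rw [this, Set.ncard_union_eq, Set.ncard_prod, Set.ncard_prod, Set.ncard_compl, Set.ncard_univ,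
    hD A, hD B, Finite.card_option, Finite.card_option]
  rw [Set.disjoint_left]
  rintro ⟨x, y⟩ h1 h2
  exact h2.1 h1.1

theorem crt {m n : ℕ} [NeZero m] [NeZero n] (h : Nat.Coprime m n) (i : ZMod m) (j : ZMod n) :
    ∃ t : ℕ, (t : ZMod m) = i ∧ (t : ZMod n) = j := by
  obtain ⟨t, h1, h2⟩ := Nat.chineseRemainder h i.val j.val
  refine ⟨t, ?_, ?_⟩
  · rw [(ZMod.natCast_eq_natCast_iff _ _ _).mpr h1]; simp
  · rw [(ZMod.natCast_eq_natCast_iff _ _ _).mpr h2]; simp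

theorem dist0 {m n : ℕ} [NeZero m] [NeZero n] (hn : 2 ≤ n) (h : Nat.Coprime m n)
    (i : ZMod m) (x' : Option (ZMod m)) (y' : Option (ZMod n)) (hx : some i ≠ x') :
    ∃ t : ℕ, i + t = 0 ∧ ¬ ((∃ q, x' = some q ∧ q + t = 0) ∨ (∃ q, y' = some q ∧ q + t = 0)) := by
  haveI : Fact (1 < n) := ⟨hn⟩
  obtain ⟨t, h1, h2⟩ := crt h (-i) (1 - y'.getD 0)
  refine ⟨t, by simp [h1], ?_⟩
  rintro (⟨q, rfl, hq⟩ | ⟨q, rfl, hq⟩)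
  · rw [h1] at hq
    exact hx (congrArg some (add_neg_eq_zero.mp hq).symm)
  · rw [h2] at hq
    simp at hq

theorem dist1 {m n : ℕ} [NeZero m] [NeZero n] (hn : 2 ≤ n) (h : Nat.Coprime m n)
    (x x' : Option (ZMod m)) (y y' : Option (ZMod n)) (hx : x ≠ x') :
    ∃ t : ℕ, ¬ (((∃ q, x = some q ∧ q + t = 0) ∨ (∃ q, y = some q ∧ q + t = 0)) ↔
      ((∃ q, x' = some q ∧ q + t = 0) ∨ (∃ q, y' = some q ∧ q + t = 0))) := by
  cases x with
  | some i =>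
    obtain ⟨t, h1, h2⟩ := dist0 hn h i x' y' hx
    exact ⟨t, fun e => h2 (e.mp (Or.inl ⟨i, rfl, h1⟩))⟩
  | none =>
    cases x' with
    | none => exact absurd rfl hx
    | some i =>
      obtain ⟨t, h1, h2⟩ := dist0 hn h i none y hx.symm
      exact ⟨t, fun e => h2 (e.mpr (Or.inl ⟨i, rfl, h1⟩))⟩

section main

variable {n₁ n₂ : ℕ} [NeZero n₁] [NeZero n₂] (c : α) (k₁ k₂ : α → ℕ)

theorem prod_eval_c (x : Option (ZMod n₁)) (y : Option (ZMod n₂)) (hxy : x.isSome ∨ y.isSome)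
    (m : ℕ) :
    (prod (cyc n₁ c k₁) (cyc n₂ c k₂)).evalFrom (x, y) (List.replicate m c) =
      some (x.map (· + (m : ZMod n₁)), y.map (· + (m : ZMod n₂))) := by
  induction m generalizing x y with
  | zero => simp [evalFrom_nil]
  | succ m ih =>
    have hs : (prod (cyc n₁ c k₁) (cyc n₂ c k₂)).step (x, y) c =
        some (x.map (· + 1), y.map (· + 1)) := by
      simp only [prod, cyc_step_c]
      cases x <;> cases y <;> simp_all
    rw [List.replicate_succ, evalFrom_cons, hs, Option.bind_some, ih _ _ (by simpa using hxy)]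
    cases x <;> cases y <;> simp [add_assoc, add_comm (1 : ZMod n₁), add_comm (1 : ZMod n₂)]

theorem prod_reach (hcop : Nat.Coprime n₁ n₂) (b : α) (hb : b ≠ c)
    (h₁ : 1 ≤ k₁ b ∧ k₁ b < n₁) (h₂ : 1 ≤ k₂ b ∧ k₂ b < n₂)
    (x : Option (ZMod n₁)) (y : Option (ZMod n₂)) (hxy : x.isSome ∨ y.isSome) :
    ∃ w, (prod (cyc n₁ c k₁) (cyc n₂ c k₂)).eval w = some (x, y) := by
  have hR : ∀ (i : ZMod n₁) (j : ZMod n₂),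
      ∃ w, (prod (cyc n₁ c k₁) (cyc n₂ c k₂)).eval w = some (some i, some j) := by
    intro i j
    obtain ⟨t, h1, h2⟩ := crt hcop i j
    refine ⟨List.replicate t c, ?_⟩
    have := prod_eval_c c k₁ k₂ (some (0 : ZMod n₁)) (some (0 : ZMod n₂)) (by simp) t
    simp only [Option.map_some, h1, h2, zero_add] at this
    exact this
  rcases x with _ | i <;> rcases y with _ | j
  · simp at hxy
  · obtain ⟨w, hw⟩ := hR (k₁ b : ℕ) 0
    refine ⟨w ++ b :: List.replicate j.val c, ?_⟩
    unfold IDFA.eval at hw ⊢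
    have hs : (prod (cyc n₁ c k₁) (cyc n₂ c k₂)).step
        (some ((k₁ b : ℕ) : ZMod n₁), some 0) b = some (none, some 0) := by
      simp [prod, cyc_step_b _ _ _ _ _ hb, ZMod.val_natCast_of_lt h₁.2]; omega
    rw [evalFrom_append, hw, Option.bind_some, evalFrom_cons, hs, Option.bind_some,
      prod_eval_c _ _ _ _ _ (by simp)]
    simp
  · obtain ⟨w, hw⟩ := hR 0 (k₂ b : ℕ)
    refine ⟨w ++ b :: List.replicate i.val c, ?_⟩
    unfold IDFA.eval at hw ⊢
    have hs : (prod (cyc n₁ c k₁) (cyc n₂ c k₂)).step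
        (some 0, some ((k₂ b : ℕ) : ZMod n₂)) b = some (some 0, none) := by
      simp [prod, cyc_step_b _ _ _ _ _ hb, ZMod.val_natCast_of_lt h₂.2]; omega
    rw [evalFrom_append, hw, Option.bind_some, evalFrom_cons, hs, Option.bind_some,
      prod_eval_c _ _ _ _ _ (by simp)]
    simp
  · exact hR i j

theorem prod_live (x : Option (ZMod n₁)) (y : Option (ZMod n₂)) (hxy : x.isSome ∨ y.isSome) :
    ∃ w, Acc (prod (cyc n₁ c k₁) (cyc n₂ c k₂)) (x, y) w := by
  simp only [prod_acc]
  rcases hxy with h | h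
  · obtain ⟨q, rfl⟩ := Option.isSome_iff_exists.mp h
    obtain ⟨w, hw⟩ := cyc_live n₁ c k₁ q
    exact ⟨w, Or.inl ⟨q, rfl, hw⟩⟩
  · obtain ⟨q, rfl⟩ := Option.isSome_iff_exists.mp h
    obtain ⟨w, hw⟩ := cyc_live n₂ c k₂ q
    exact ⟨w, Or.inr ⟨q, rfl, hw⟩⟩

theorem prod_dist (hn₁ : 2 ≤ n₁) (hn₂ : 2 ≤ n₂) (hcop : Nat.Coprime n₁ n₂)
    (x x' : Option (ZMod n₁)) (y y' : Option (ZMod n₂)) (hne : (x, y) ≠ (x', y')) :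
    ∃ w, ¬ (Acc (prod (cyc n₁ c k₁) (cyc n₂ c k₂)) (x, y) w ↔
      Acc (prod (cyc n₁ c k₁) (cyc n₂ c k₂)) (x', y') w) := by
  by_cases hx : x = x'
  · have hy : y ≠ y' := by rintro rfl; exact hne (by rw [hx])
    obtain ⟨t, ht⟩ := dist1 hn₁ hcop.symm y y' x x' hy
    refine ⟨List.replicate t c, ?_⟩
    simp only [prod_acc, cyc_acc]
    rw [or_comm, or_comm (a := ∃ q, x' = some q ∧ q + (t : ZMod n₁) = 0)]
    exact ht
  · obtain ⟨t, ht⟩ := dist1 hn₂ hcop x x' y y' hx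
    refine ⟨List.replicate t c, ?_⟩
    simp only [prod_acc, cyc_acc]
    exact ht

theorem prod_step_some (A : IDFA α σ) (B : IDFA α τ) (x : Option σ) (y : Option τ) (b : α)
    (h : ((prod A B).step (x, y) b).isSome) :
    (x.isSome ∨ y.isSome) ∧ ∃ x' y', (prod A B).step (x, y) b = some (x', y') ∧
      (x'.isSome ∨ y'.isSome) := by
  by_cases h' : (x.bind (A.step · b)).isSome ∨ (y.bind (B.step · b)).isSome
  · refine ⟨?_, _, _, by simp only [prod]; rw [if_pos h'], h'⟩
    cases x <;> cases y <;> simp_all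
  · simp only [prod] at h
    rw [if_neg h'] at h
    simp at h

end main

end UnionLB

/-- the lower bound construction for the `b`-transition complexity
of union can be realized simultaneously for all symbols `b ≠ c`. -/
theorem tcOn_union_simultaneous_lower_bound {α : Type} [Finite α] (hcard : 2 ≤ Nat.card α)
    (c : α) (n₁ n₂ : ℕ) (hn₁ : 2 ≤ n₁) (hn₂ : 2 ≤ n₂) (hcop : Nat.Coprime n₁ n₂)
    (k₁ k₂ : α → ℕ)
    (hk₁ : ∀ b : α, b ≠ c → 1 ≤ k₁ b ∧ k₁ b < n₁)
    (hk₂ : ∀ b : α, b ≠ c → 1 ≤ k₂ b ∧ k₂ b < n₂) :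
    ∃ L₁ L₂ : Set (List α), IsRegularLang L₁ ∧ IsRegularLang L₂ ∧
      sc L₁ = n₁ ∧ sc L₂ = n₂ ∧
      (∀ b : α, b ≠ c → tcOn L₁ b = k₁ b ∧ tcOn L₂ b = k₂ b) ∧
      (∀ b : α, b ≠ c →
        tcOn (L₁ ∪ L₂) b =
          k₁ b * k₂ b + k₁ b * (1 + n₂ - k₂ b) + k₂ b * (1 + n₁ - k₁ b)) := by
  haveI : NeZero n₁ := ⟨by omega⟩
  haveI : NeZero n₂ := ⟨by omega⟩
  refine ⟨(UnionLB.cyc n₁ c k₁).accepts, (UnionLB.cyc n₂ c k₂).accepts,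
    ⟨_, inferInstance, _, rfl⟩, ⟨_, inferInstance, _, rfl⟩, ?_, ?_, ?_, ?_⟩
  · rw [UnionLB.sc_eq _ (UnionLB.cyc_reach _ _ _) (UnionLB.cyc_live _ _ _)
      (UnionLB.cyc_dist _ _ _), Nat.card_zmod]
  · rw [UnionLB.sc_eq _ (UnionLB.cyc_reach _ _ _) (UnionLB.cyc_live _ _ _)
      (UnionLB.cyc_dist _ _ _), Nat.card_zmod]
  · intro b hb
    constructor
    · rw [UnionLB.tcOn_eq _ _ (fun q _ => UnionLB.cyc_reach _ _ _ q)
        (fun q h => UnionLB.cyc_live_b _ _ _ q b h)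
        (fun p _ q _ => UnionLB.cyc_dist _ _ _ p q), UnionLB.cyc_tr _ _ _ _ hb (hk₁ b hb).2]
    · rw [UnionLB.tcOn_eq _ _ (fun q _ => UnionLB.cyc_reach _ _ _ q)
        (fun q h => UnionLB.cyc_live_b _ _ _ q b h)
        (fun p _ q _ => UnionLB.cyc_dist _ _ _ p q), UnionLB.cyc_tr _ _ _ _ hb (hk₂ b hb).2]
  · intro b hb
    rw [← UnionLB.prod_accepts, UnionLB.tcOn_eq, UnionLB.prod_tr,
      UnionLB.cyc_tr _ _ _ _ hb (hk₁ b hb).2, UnionLB.cyc_tr _ _ _ _ hb (hk₂ b hb).2,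
      Nat.card_zmod, Nat.card_zmod]
    · obtain ⟨d₁, hd₁⟩ := Nat.exists_eq_add_of_lt (hk₁ b hb).2
      obtain ⟨d₂, hd₂⟩ := Nat.exists_eq_add_of_lt (hk₂ b hb).2
      have e1 : n₁ + 1 - k₁ b = d₁ + 2 := by omega
      have e1' : 1 + n₁ - k₁ b = d₁ + 2 := by omega
      have e2 : 1 + n₂ - k₂ b = d₂ + 2 := by omega
      have e3 : n₂ + 1 = k₂ b + (d₂ + 2) := by omega
      rw [e1, e1', e2, e3]; ring
    · rintro ⟨x, y⟩ h
      exact UnionLB.prod_reach c k₁ k₂ hcop b hb (hk₁ b hb) (hk₂ b hb) x y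
        (UnionLB.prod_step_some _ _ x y b h).1
    · rintro ⟨x, y⟩ h
      obtain ⟨-, x', y', h1, h2⟩ := UnionLB.prod_step_some _ _ x y b h
      obtain ⟨w, hw⟩ := UnionLB.prod_live c k₁ k₂ x' y' h2
      exact ⟨w, (UnionLB.acc_cons _ _ _ _).mpr ⟨_, h1, hw⟩⟩
    · rintro ⟨x, y⟩ - ⟨x', y'⟩ - hne
      exact UnionLB.prod_dist c k₁ k₂ hn₁ hn₂ hcop x x' y y' hne
end

section
/- Let L₁ and L₂ be regular languages over a finite alphabet Σ. If there exists a symbol c ∈ Σ such that in the minimal incomplete DFA for Lᵢ (i = 1, 2) all c-transitions are defined (i.e. tc_c(Lᵢ) = sc(Lᵢ)), then tc(L₁ ∪ L₂) ≤ tc(L₁)·tc(L₂) + tc(L₁) + tc(L₂) − 1. -/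
namespace IDFA

variable {α σ τ : Type}

theorem eval_nil (A : IDFA α σ) : A.eval [] = some A.start := rfl

theorem eval_snoc (A : IDFA α σ) (w : List α) (a : α) :
    A.eval (w ++ [a]) = (A.eval w).bind fun p => A.step p a := by
  simp [eval, evalFrom, List.foldl_append]

theorem eval_append (A : IDFA α σ) (w v : List α) :
    A.eval (w ++ v) = (A.eval w).bind fun p => A.evalFrom p v := by
  unfold eval
  rw [evalFrom, List.foldl_append]
  change List.foldl _ (A.evalFrom A.start w) v = _
  cases A.evalFrom A.start w with
  | none => simpa using foldl_none A v
  | some p => rfl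

end IDFA

open Classical in
/-- canonical automaton of left quotients -/
noncomputable def quotAut {α : Type} (L : Set (List α)) (hL : L.Nonempty) :
    IDFA α {K : Set (List α) // K.Nonempty ∧ ∃ w, K = {v | w ++ v ∈ L}} where
  step K a := if h : {v | a :: v ∈ K.1}.Nonempty then
      some ⟨{v | a :: v ∈ K.1}, h, by
        obtain ⟨w, hw⟩ := K.2.2
        refine ⟨w ++ [a], ?_⟩
        rw [hw]; ext v; simp⟩ else none
  start := ⟨L, hL, [], by simp⟩
  accept := {K | [] ∈ K.1}

theorem quotAut_eval {α : Type} (L : Set (List α)) (hL : L.Nonempty) (w : List α) :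
    (∀ K, (quotAut L hL).eval w = some K → K.1 = {v | w ++ v ∈ L}) ∧
    ((quotAut L hL).eval w = none → ¬ {v | w ++ v ∈ L}.Nonempty) := by
  induction w using List.reverseRecOn with
  | nil =>
    rw [IDFA.eval_nil]
    constructor
    · rintro K h
      cases h
      simp [quotAut]
    · simp
  | append_singleton w a ih =>
    rw [IDFA.eval_snoc]
    cases h : (quotAut L hL).eval w with
    | none =>
      refine ⟨by simp, fun _ hne => ?_⟩
      obtain ⟨v, hv⟩ := hne
      exact ih.2 h ⟨a :: v, by simpa using hv⟩
    | some K =>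
      have hK := ih.1 K h
      by_cases hn : {v | a :: v ∈ K.1}.Nonempty
      · simp only [Option.bind_some, quotAut, dif_pos hn]
        refine ⟨?_, by simp⟩
        rintro K' h'
        cases h'
        simp [hK]
      · simp only [Option.bind_some, quotAut, dif_neg hn]
        refine ⟨by simp, fun _ => ?_⟩
        rw [hK] at hn
        simpa using hn

theorem quotAut_accepts {α : Type} (L : Set (List α)) (hL : L.Nonempty) :
    (quotAut L hL).accepts = L := by
  ext w
  have h := quotAut_eval L hL w
  constructor
  · rintro ⟨K, hK, hw⟩
    have : [] ∈ K.1 := hK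
    rw [h.1 K hw] at this
    simpa using this
  · intro hw
    cases he : (quotAut L hL).eval w with
    | none => exact absurd ⟨[], by simpa using hw⟩ (h.2 he)
    | some K =>
      refine ⟨K, ?_, he⟩
      change [] ∈ K.1
      rw [h.1 K he]
      simpa using hw

theorem quotAut_inj {α σ : Type} (L : Set (List α)) (hL : L.Nonempty) (A : IDFA α σ)
    (hA : A.accepts = L) :
    ∃ g : {K : Set (List α) // K.Nonempty ∧ ∃ w, K = {v | w ++ v ∈ L}} → σ,
      Function.Injective g ∧ ∀ K a, ((quotAut L hL).step K a).isSome → (A.step (g K) a).isSome := by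
  have key : ∀ K : {K : Set (List α) // K.Nonempty ∧ ∃ w, K = {v | w ++ v ∈ L}},
      ∃ q : σ, K.1 = {v | ∃ p ∈ A.accept, A.evalFrom q v = some p} := by
    rintro ⟨K, ⟨v, hv⟩, w, rfl⟩
    have h1 : ∀ v, w ++ v ∈ L ↔ ∃ p ∈ A.accept,
        (A.eval w).bind (fun q => A.evalFrom q v) = some p := by
      intro v
      rw [← hA, ← IDFA.eval_append]; rfl
    cases hq : A.eval w with
    | none =>
      have := (h1 v).1 hv
      simp [hq] at this
    | some q =>
      refine ⟨q, ?_⟩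
      ext v
      simp [h1, hq]
  choose g hg using key
  refine ⟨g, ?_, ?_⟩
  · intro K K' h
    apply Subtype.ext
    rw [hg K, hg K', h]
  · intro K a h
    have hn : {v | a :: v ∈ K.1}.Nonempty := by
      by_contra hn
      simp [quotAut, dif_neg hn] at h
    obtain ⟨v, hv⟩ := hn
    have hv : a :: v ∈ K.1 := hv
    rw [hg K] at hv
    obtain ⟨p, -, hp⟩ := hv
    cases hs : A.step (g K) a with
    | none =>
      simp [IDFA.evalFrom, hs, IDFA.foldl_none] at hp
    | some _ => rfl

theorem exists_good {α : Type} [Finite α] (L : Set (List α)) (hr : IsRegularLang L) (c : α)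
    (hc : tcOn L c = sc L) :
    ∃ (σ : Type) (_ : Finite σ) (A : IDFA α σ), A.accepts = L ∧ A.trCount ≤ tc L ∧
      ∀ q, (A.step q c).isSome := by
  obtain ⟨σ, hσ, A, hA⟩ := hr
  have hsc : sc L ∈ {n | ∃ (σ : Type) (_ : Finite σ) (A : IDFA α σ), A.accepts = L ∧ Nat.card σ = n} :=
    Nat.sInf_mem ⟨_, σ, hσ, A, hA, rfl⟩
  have htc : tc L ∈ {n | ∃ (σ : Type) (_ : Finite σ) (A : IDFA α σ), A.accepts = L ∧ A.trCount = n} :=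
    Nat.sInf_mem ⟨_, σ, hσ, A, hA, rfl⟩
  have hL : L.Nonempty := by
    by_contra hne
    rw [Set.not_nonempty_iff_eq_empty] at hne
    obtain ⟨σ', hσ', A', -, h2⟩ := hsc
    haveI : Nonempty σ' := ⟨A'.start⟩
    have hpos : 0 < Nat.card σ' := Nat.card_pos
    have h0 : tcOn L c ≤ 0 := Nat.sInf_le
      ⟨Unit, inferInstance, ⟨fun _ _ => none, (), ∅⟩, by
        rw [hne]; ext w; simp [IDFA.accepts], by simp [IDFA.trCountOn]⟩
    omega
  have hfin : Finite {K : Set (List α) // K.Nonempty ∧ ∃ w, K = {v | w ++ v ∈ L}} := by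
    obtain ⟨g, hg, -⟩ := quotAut_inj L hL A hA
    exact Finite.of_injective g hg
  refine ⟨_, hfin, quotAut L hL, quotAut_accepts L hL, ?_, ?_⟩
  · obtain ⟨σ', hσ', A', hA', h2⟩ := htc
    obtain ⟨g, hg, hs⟩ := quotAut_inj L hL A' hA'
    rw [← h2]
    refine Set.ncard_le_ncard_of_injOn (fun p => (g p.1, p.2)) ?_ ?_ (Set.toFinite _)
    · intro p hp
      exact hs _ _ hp
    · rintro ⟨p, a⟩ _ ⟨q, b⟩ _ h
      simp only [Prod.mk.injEq] at h
      rw [hg h.1, h.2]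
  · obtain ⟨σ', hσ', A', hA', h2⟩ := hsc
    obtain ⟨g, hg, -⟩ := quotAut_inj L hL A' hA'
    have h3 := Nat.card_le_card_of_injective g hg
    have h4 : tcOn L c ≤ (quotAut L hL).trCountOn c :=
      Nat.sInf_le ⟨_, hfin, _, quotAut_accepts L hL, rfl⟩
    have h5 : {q | ((quotAut L hL).step q c).isSome} = Set.univ := by
      apply Set.eq_of_subset_of_ncard_le (Set.subset_univ _) _ (Set.toFinite _)
      rw [Set.ncard_univ]
      unfold IDFA.trCountOn at h4
      omega
    intro q
    have : q ∈ {q | ((quotAut L hL).step q c).isSome} := h5 ▸ Set.mem_univ q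
    exact this

/-- raw product move -/
def mv {α σ τ : Type} (A : IDFA α σ) (B : IDFA α τ) (s : Option σ × Option τ) (a : α) :
    Option σ × Option τ :=
  (s.1.bind fun p => A.step p a, s.2.bind fun p => B.step p a)

open Classical in
/-- union automaton restricted to a set of states -/
noncomputable def unionAut {α σ τ : Type} (A : IDFA α σ) (B : IDFA α τ)
    (R : Set (Option σ × Option τ)) : IDFA α (Option σ × Option τ) where
  step s a := if s ∈ R ∧ mv A B s a ≠ (none, none) then some (mv A B s a) else none
  start := (some A.start, some B.start)
  accept := {s | (∃ p ∈ A.accept, s.1 = some p) ∨ (∃ p ∈ B.accept, s.2 = some p)}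

open Classical in
theorem unionAut_eval {α σ τ : Type} (A : IDFA α σ) (B : IDFA α τ)
    (R : Set (Option σ × Option τ)) (h0 : (some A.start, some B.start) ∈ R)
    (hR : ∀ s ∈ R, ∀ a, mv A B s a ≠ (none, none) → mv A B s a ∈ R) (w : List α) :
    ((A.eval w, B.eval w) ≠ (none, none) → (A.eval w, B.eval w) ∈ R) ∧
    (unionAut A B R).eval w = if (A.eval w, B.eval w) = (none, none) then none else
      some (A.eval w, B.eval w) := by
  induction w using List.reverseRecOn with
  | nil => simp [IDFA.eval_nil, h0, unionAut]
  | append_singleton w a ih =>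
    obtain ⟨ih1, ih2⟩ := ih
    have e : (A.eval (w ++ [a]), B.eval (w ++ [a])) = mv A B (A.eval w, B.eval w) a := by
      simp [IDFA.eval_snoc, mv]
    rw [e, IDFA.eval_snoc, ih2]
    by_cases hn : (A.eval w, B.eval w) = (none, none)
    · rw [hn]; simp [mv]
    · have hm := ih1 hn
      refine ⟨hR _ hm a, ?_⟩
      rw [if_neg hn]
      simp only [Option.bind_some, unionAut]
      by_cases h2 : mv A B (A.eval w, B.eval w) a = (none, none)
      · rw [if_neg (by tauto), if_pos h2]
      · rw [if_pos ⟨hm, h2⟩, if_neg h2]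

theorem unionAut_accepts {α σ τ : Type} (A : IDFA α σ) (B : IDFA α τ)
    (R : Set (Option σ × Option τ)) (h0 : (some A.start, some B.start) ∈ R)
    (hR : ∀ s ∈ R, ∀ a, mv A B s a ≠ (none, none) → mv A B s a ∈ R) :
    (unionAut A B R).accepts = A.accepts ∪ B.accepts := by
  ext w
  have h := (unionAut_eval A B R h0 hR w).2
  simp only [IDFA.accepts, Set.mem_setOf_eq, Set.mem_union, h]
  cases hA : A.eval w <;> cases hB : B.eval w <;> simp [unionAut]

open Classical in
/-- encoding of transitions of the union automaton -/
noncomputable def enc {α σ τ : Type} (A : IDFA α σ) (c : α) :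
    (Option σ × Option τ) × α → Option (σ × α) × Option (τ × α)
  | ((none, none), _) => (none, none)
  | ((some p, none), b) => (some (p, b), none)
  | ((none, some q), b) => (none, some (q, b))
  | ((some p, some q), b) => if (A.step p b).isSome then (some (p, b), some (q, c))
      else (some (p, c), some (q, b))

theorem count_bound {α σ τ : Type} [Finite α] [Finite σ] [Finite τ] (A : IDFA α σ) (B : IDFA α τ)
    (c : α) (hA : ∀ q, (A.step q c).isSome) (hB : ∀ q, (B.step q c).isSome)
    (R : Set (Option σ × Option τ)) (x : Option (σ × α) × Option (τ × α))
    (hx0 : x ≠ (none, none))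
    (hx1 : ∀ p ∈ x.1, (A.step p.1 p.2).isSome) (hx2 : ∀ p ∈ x.2, (B.step p.1 p.2).isSome)
    (hx : ∀ s ∈ R, ∀ a, mv A B s a ≠ (none, none) → enc A c (s, a) ≠ x) :
    (unionAut A B R).trCount ≤ A.trCount * B.trCount + A.trCount + B.trCount - 1 := by
  set D₁ := {p : σ × α | (A.step p.1 p.2).isSome} with hD₁
  set D₂ := {p : τ × α | (B.step p.1 p.2).isSome} with hD₂
  have hopt : ∀ {β : Type} [Finite β] (D : Set β), (insert none (some '' D)).ncard = D.ncard + 1 := by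
    intro β _ D
    rw [Set.ncard_insert_of_notMem (by simp) (Set.toFinite _),
      Set.ncard_image_of_injective _ (Option.some_injective _)]
  set E := (insert none (some '' D₁)) ×ˢ (insert none (some '' D₂)) with hE
  have hEc : E.ncard = (A.trCount + 1) * (B.trCount + 1) := by
    rw [hE, Set.ncard_prod, hopt, hopt]; rfl
  have hn : (none, none) ∈ E := by simp [hE]
  have hxE : x ∈ E \ {(none, none)} := by
    refine ⟨?_, hx0⟩
    obtain ⟨x1, x2⟩ := x
    refine ⟨?_, ?_⟩
    · cases x1 with
      | none => simp
      | some p => right; exact ⟨p, hx1 p rfl, rfl⟩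
    · cases x2 with
      | none => simp
      | some p => right; exact ⟨p, hx2 p rfl, rfl⟩
  have hc1 := Set.ncard_diff_singleton_add_one hn (Set.toFinite _)
  have hc2 := Set.ncard_diff_singleton_add_one hxE (Set.toFinite _)
  have hmem : ∀ t : (Option σ × Option τ) × α, ((unionAut A B R).step t.1 t.2).isSome →
      t.1 ∈ R ∧ mv A B t.1 t.2 ≠ (none, none) := by
    intro t ht
    by_contra hcon
    simp only [unionAut, if_neg hcon] at ht
    simp at ht
  have hle : (unionAut A B R).trCount ≤ ((E \ {(none, none)}) \ {x}).ncard := by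
    refine Set.ncard_le_ncard_of_injOn (enc A c) ?_ ?_ (Set.toFinite _)
    · intro t ht
      obtain ⟨h1, h2⟩ := hmem t ht
      have h3 := hx _ h1 _ h2
      refine ⟨?_, h3⟩
      obtain ⟨⟨p, q⟩, b⟩ := t
      rcases p with _ | p <;> rcases q with _ | q
      · simp [mv] at h2
      · simpa [enc, hE, hD₂, mv, Option.isSome_iff_ne_none] using h2
      · simpa [enc, hE, hD₁, mv, Option.isSome_iff_ne_none] using h2
      · by_cases hp : (A.step p b).isSome
        · simp [enc, hE, hD₁, hD₂, hp, hB]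
        · have : (B.step q b).isSome := by
            simp [mv] at h2 hp
            simpa [Option.isSome_iff_ne_none] using h2 hp
          simp [enc, hE, hD₁, hD₂, hp, hA, this]
    · rintro ⟨⟨p, q⟩, b⟩ ht ⟨⟨p', q'⟩, b'⟩ ht' h
      obtain ⟨-, h2⟩ := hmem _ ht
      obtain ⟨-, h2'⟩ := hmem _ ht'
      have hA' := hA
      rcases p with _ | p <;> rcases q with _ | q <;> rcases p' with _ | p' <;>
        rcases q' with _ | q' <;> simp only [enc] at h <;> simp [mv] at h2 h2' <;> grind
  have : (A.trCount + 1) * (B.trCount + 1) = A.trCount * B.trCount + A.trCount + B.trCount + 1 := by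
    ring
  omega

theorem union_bound {α σ τ : Type} [Finite α] [Finite σ] [Finite τ] (A : IDFA α σ) (B : IDFA α τ)
    (c : α) (hA : ∀ q, (A.step q c).isSome) (hB : ∀ q, (B.step q c).isSome)
    (h : (∀ p b, (A.step p b).isSome → b = c) ∨
      ((∃ p b, (A.step p b).isSome ∧ b ≠ c) ∧ (∃ p b, (B.step p b).isSome ∧ b ≠ c))) :
    tc (A.accepts ∪ B.accepts) ≤ A.trCount * B.trCount + A.trCount + B.trCount - 1 := by
  have main : ∀ R : Set (Option σ × Option τ), (some A.start, some B.start) ∈ R →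
      (∀ s ∈ R, ∀ a, mv A B s a ≠ (none, none) → mv A B s a ∈ R) →
      tc (A.accepts ∪ B.accepts) ≤ (unionAut A B R).trCount := fun R h0 hR =>
    Nat.sInf_le ⟨_, inferInstance, _, unionAut_accepts A B R h0 hR, rfl⟩
  rcases h with h | ⟨⟨p, b, hp, hb⟩, ⟨q, d, hq, hd⟩⟩
  · refine (main {s | s.2 = none → s.1 = none} (by simp) ?_).trans
      (count_bound A B c hA hB _ (some (A.start, c), none) (by simp) ?_ (by simp) ?_)
    · rintro ⟨p, q⟩ hs a -
      simp only [Set.mem_setOf_eq] at hs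
      simp only [mv, Set.mem_setOf_eq]
      intro hq
      rcases p with _ | p
      · rfl
      rcases q with _ | q
      · simp at hs
      simp only [Option.bind_some] at hq ⊢
      by_contra hne
      have h5 := h p a (Option.isSome_iff_ne_none.2 hne)
      have h6 := hB q
      rw [← h5, hq] at h6
      simp at h6
    · rintro p hp
      simp at hp
      subst hp
      exact hA _
    · rintro ⟨p, q⟩ hs a -
      simp only [Set.mem_setOf_eq] at hs
      rcases p with _ | p <;> rcases q with _ | q <;> simp only [enc] <;> grind
  · refine (main Set.univ trivial (fun _ _ _ _ => trivial)).trans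
      (count_bound A B c hA hB _ (some (p, b), some (q, d)) (by simp) ?_ ?_ ?_)
    · rintro _ ⟨⟩; exact hp
    · rintro _ ⟨⟩; exact hq
    · rintro ⟨p, q⟩ hs a -
      rcases p with _ | p <;> rcases q with _ | q <;> simp only [enc] <;> grind

/-- if for some symbol `c` all `c`-transitions are defined in the
minimal incomplete DFAs of `L₁` and of `L₂` (i.e. `tc_c(Lᵢ) = sc(Lᵢ)`), then
`tc(L₁ ∪ L₂) ≤ tc(L₁)·tc(L₂) + tc(L₁) + tc(L₂) - 1`. -/
theorem tc_union_le_of_complete_symbol {α : Type} [Finite α]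
    (L₁ L₂ : Set (List α)) (h₁ : IsRegularLang L₁) (h₂ : IsRegularLang L₂)
    (hc : ∃ c : α, tcOn L₁ c = sc L₁ ∧ tcOn L₂ c = sc L₂) :
    tc (L₁ ∪ L₂) ≤ tc L₁ * tc L₂ + tc L₁ + tc L₂ - 1 := by
  obtain ⟨c, hc1, hc2⟩ := hc
  obtain ⟨σ, hσ, A, hA, hAt, hAc⟩ := exists_good L₁ h₁ c hc1
  obtain ⟨τ, hτ, B, hB, hBt, hBc⟩ := exists_good L₂ h₂ c hc2
  have key : tc (L₁ ∪ L₂) ≤ A.trCount * B.trCount + A.trCount + B.trCount - 1 := by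
    by_cases h1 : ∀ p b, (A.step p b).isSome → b = c
    · rw [← hA, ← hB]
      exact union_bound A B c hAc hBc (Or.inl h1)
    by_cases h2 : ∀ p b, (B.step p b).isSome → b = c
    · have := union_bound B A c hBc hAc (Or.inl h2)
      rw [hA, hB, Set.union_comm, mul_comm] at this
      omega
    · rw [← hA, ← hB]
      refine union_bound A B c hAc hBc (Or.inr ⟨?_, ?_⟩)
      · push Not at h1
        exact h1
      · push Not at h2
        exact h2
  have := Nat.mul_le_mul hAt hBt
  omega
end
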